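/- Let A be a Hadamard matrix of order h ≥ 4, let d ≥ 1, and for each B ∈ {−1,1}^{h×d} define C by c_{ij} = sgn((AᵀB)_{ji}), F = C A⁻¹ B, and G = F + I. Then, averaging over all 2^{hd} equally likely choices of B: E[g_{ii}] = 1 + 2^{−h}·h·binom(h, h/2); E[g_{ij}] = 0 for i ≠ j; Var[g_{ii}] = 1 + h(h−1)·2^{−(h+1)}·binom(h/2, h/4)² − h²·2^{−2h}·binom(h, h/2)²; and Var[g_{ij}] = 1 for i ≠ j. -/

import Mathlib

open Matrix

/-- The `±1` sign function: `sgn x = 1` if `x ≥ 0`, `−1` if `x < 0`. -/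
noncomputable def sgn (x : ℝ) : ℝ := if 0 ≤ x then 1 else -1

/-- The `h × d` sign matrix corresponding to a Boolean matrix `b`. -/
noncomputable def signMat {h d : ℕ} (b : Fin h → Fin d → Bool) :
    Matrix (Fin h) (Fin d) ℝ :=
  Matrix.of fun i j => if b i j then (1 : ℝ) else -1

/-- The matrix `C` with `c_{ij} = sgn((Aᵀ B)_{ji})`. -/
noncomputable def Cmat {h d : ℕ} (A : Matrix (Fin h) (Fin h) ℝ)
    (B : Matrix (Fin h) (Fin d) ℝ) : Matrix (Fin d) (Fin h) ℝ :=
  Matrix.of fun i j => sgn ((Aᵀ * B) j i)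

/-- The matrix `F = C A⁻¹ B`. -/
noncomputable def Fmat {h d : ℕ} (A : Matrix (Fin h) (Fin h) ℝ)
    (B : Matrix (Fin h) (Fin d) ℝ) : Matrix (Fin d) (Fin d) ℝ :=
  Cmat A B * A⁻¹ * B

/-- Expectation of `f(B)`, averaged over the `2^(h·d)` equally likely
`h × d` matrices `B` with entries in `{−1, 1}`. -/
noncomputable def expec (h d : ℕ) (f : Matrix (Fin h) (Fin d) ℝ → ℝ) : ℝ :=
  (∑ b : Fin h → Fin d → Bool, f (signMat b)) / 2 ^ (h * d)

/-!
For columns `x`, `y` of `B` and `z = Aᵀx`, `w = Aᵀy`, the corresponding entry of `F` is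
`h⁻¹ ∑ₖ sgn(zₖ) wₖ`. Off the diagonal `y` is independent of `x`, so for fixed `x` the first two
moments follow from the orthogonality of the columns of `A`. On the diagonal the entry is
`h⁻¹ ∑ₖ |zₖ|`, whose second moment needs `E|zₖ zₗ|` for `k ≠ l`. The columns `k` and `l` of `A`
agree in exactly half of the rows, so `|zₖ zₗ|` is distributed as `|X² - Y²|` with `X`, `Y`
independent sums of `h / 2` signs. Writing `X² - Y² = pq` with `p = X + Y` and `q = X - Y`, a step
of the walk `(X, Y)` moves exactly one of `p`, `q` by `±2`; hence `E|pq|` only grows when `p = 0` or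
`q = 0`, by an amount proportional to `∑ₖ binom(n, k)² |2k - n|`, and half of this sum telescopes.
-/

open Finset
open scoped BigOperators

section SignSum

variable {ι κ M : Type*} [Fintype ι] [Fintype κ] [AddCommMonoid M]

/-- The sum of the entries of a sign vector. Sign vectors are indexed by `ι → ℤˣ`, so that flipping
entries is a translation in a group. -/
def signSum (ε : ι → ℤˣ) : ℤ := ∑ i, (ε i : ℤ)

lemma signSum_neg (ε : ι → ℤˣ) : signSum (-ε) = -signSum ε := by
  simp [signSum]

lemma signSum_cons {n : ℕ} (u : ℤˣ) (ε : Fin n → ℤˣ) :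
    signSum (Fin.cons u ε : Fin (n + 1) → ℤˣ) = u + signSum ε := by
  simp [signSum, Fin.sum_univ_succ]

lemma signSum_eq_two_mul_card_sub (ε : ι → ℤˣ) :
    signSum ε = 2 * (#{i | ε i = 1} : ℤ) - Fintype.card ι := by
  have h (i : ι) : (ε i : ℤ) = 2 * (if ε i = 1 then 1 else 0) - 1 := by
    rcases Int.units_eq_one_or (ε i) with hi | hi <;> simp [hi]
  simp_rw [signSum, h, sum_sub_distrib, ← mul_sum]
  simp

lemma even_signSum_add_signSum (ε δ : ι → ℤˣ) : Even (signSum ε + signSum δ) := by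
  rw [signSum_eq_two_mul_card_sub, signSum_eq_two_mul_card_sub, Int.even_iff]
  lia

variable [DecidableEq ι] [DecidableEq κ]

lemma sum_comp_signSum (f : ℤ → M) :
    ∑ ε : ι → ℤˣ, f (signSum ε) =
      ∑ p ∈ range (Fintype.card ι + 1), (Fintype.card ι).choose p • f (2 * p - Fintype.card ι) := by
  trans ∑ s ∈ (univ : Finset ι).powerset, f (2 * (#s : ℤ) - Fintype.card ι)
  · refine sum_bij' (fun ε _ => ({i | ε i = 1} : Finset ι))
      (fun s _ i => if i ∈ s then 1 else -1) (by simp) (by simp) ?_ ?_ ?_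
    · intro ε _
      ext i
      rcases Int.units_eq_one_or (ε i) with hi | hi <;> simp [hi]
    · intro s _
      ext i
      by_cases hi : i ∈ s <;> simp [hi]
    · intro ε _
      rw [signSum_eq_two_mul_card_sub]
  · exact sum_powerset_apply_card (fun p : ℕ => f (2 * (p : ℤ) - Fintype.card ι))

lemma sum_comp_signSum_eq_of_card_eq (h : Fintype.card ι = Fintype.card κ) (f : ℤ → M) :
    ∑ ε : ι → ℤˣ, f (signSum ε) = ∑ ε : κ → ℤˣ, f (signSum ε) := by
  rw [sum_comp_signSum, sum_comp_signSum, h]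

lemma sum_comp_signSum_of_eq (f : ℤ → M) :
    ∑ ε : ι → ℤˣ, ∑ δ : ι → ℤˣ, (if signSum ε = signSum δ then f (signSum ε) else 0) =
      ∑ p ∈ range (Fintype.card ι + 1),
        (Fintype.card ι).choose p ^ 2 • f (2 * p - Fintype.card ι) := by
  have hinner (x : ℤ) := sum_comp_signSum (ι := ι) fun y => if x = y then f x else 0
  simp_rw [hinner]
  rw [sum_comp_signSum fun x => ∑ q ∈ range (Fintype.card ι + 1),
    (Fintype.card ι).choose q • if x = 2 * (q : ℤ) - Fintype.card ι then f x else 0]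
  refine sum_congr rfl fun p hp => ?_
  rw [sum_eq_single_of_mem p hp fun q _ hq => by simp [hq.symm], if_pos rfl, smul_smul, sq]

lemma sum_comp_signSum_succ {n : ℕ} (f : ℤ → M) :
    ∑ ε : Fin (n + 1) → ℤˣ, f (signSum ε) =
      ∑ ε : Fin n → ℤˣ, (f (signSum ε + 1) + f (signSum ε - 1)) := by
  rw [← (Fin.consEquiv fun _ : Fin (n + 1) => ℤˣ).sum_comp, Fintype.sum_prod_type_right]
  refine sum_congr rfl fun ε _ => ?_
  simp only [Fin.consEquiv, Equiv.coe_fn_mk, signSum_cons, UnitsInt.univ]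
  rw [sum_pair (by decide)]
  simp [add_comm, sub_eq_add_neg]

end SignSum

section Binomial

lemma succ_mul_choose_succ_int (n k : ℕ) :
    ((k : ℤ) + 1) * n.choose (k + 1) = (n - k) * n.choose k := by
  rcases le_or_gt k n with h | h
  · have := Nat.choose_succ_right_eq n k
    zify [h] at this
    linarith
  · simp [Nat.choose_eq_zero_of_lt h, Nat.choose_eq_zero_of_lt (h.trans k.lt_succ_self)]

lemma sum_range_choose_mul_sub (n k : ℕ) :
    ∑ p ∈ range (k + 1), (n.choose p : ℤ) * (n - 2 * p) = (n - k) * n.choose k := by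
  induction k with
  | zero => simp
  | succ k ih =>
    rw [sum_range_succ, ih, ← succ_mul_choose_succ_int]
    push_cast
    ring

lemma mul_sum_range_choose_sq_mul_sub (n k : ℕ) :
    (n : ℤ) * ∑ p ∈ range (k + 1), (n.choose p : ℤ) ^ 2 * (n - 2 * p) =
      ((n - k) * n.choose k) ^ 2 := by
  induction k with
  | zero => simp [sq]
  | succ k ih =>
    rw [sum_range_succ, mul_add, ih, ← succ_mul_choose_succ_int]
    push_cast
    ring

lemma sum_range_mul_abs_of_sum_eq_zero {n : ℕ} {w : ℕ → ℤ}
    (h : ∑ p ∈ range (n + 1), w p * ((n : ℤ) - 2 * p) = 0) :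
    ∑ p ∈ range (n + 1), w p * |2 * (p : ℤ) - n| =
      2 * ∑ p ∈ range (n / 2 + 1), w p * ((n : ℤ) - 2 * p) := by
  have hsplit : (range (n + 1)).filter (· < n / 2 + 1) = range (n / 2 + 1) := by
    ext p
    simp only [mem_filter, mem_range]
    lia
  rw [← add_zero (∑ p ∈ range (n + 1), _), ← h, ← sum_add_distrib, ← hsplit, sum_filter, mul_sum]
  refine sum_congr rfl fun p _ => ?_
  split_ifs with hp
  · rw [abs_of_nonpos (by lia)]
    ring
  · rw [abs_of_nonneg (by lia)]
    ring

end Binomial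

section AbsSum

variable {ι : Type*} [Fintype ι] [DecidableEq ι]

lemma sum_abs_signSum :
    ∑ ε : ι → ℤˣ, |signSum ε| = 2 * (((Fintype.card ι : ℤ) - (Fintype.card ι / 2 : ℕ)) *
      (Fintype.card ι).choose (Fintype.card ι / 2)) := by
  simp_rw [sum_comp_signSum, nsmul_eq_mul]
  rw [sum_range_mul_abs_of_sum_eq_zero (by simp [sum_range_choose_mul_sub]),
    sum_range_choose_mul_sub]

lemma card_mul_sum_abs_signSum_of_eq :
    (Fintype.card ι : ℤ) * ∑ ε : ι → ℤˣ, ∑ δ : ι → ℤˣ,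
        (if signSum ε = signSum δ then |signSum ε| else 0) =
      2 * (((Fintype.card ι : ℤ) - (Fintype.card ι / 2 : ℕ)) *
        (Fintype.card ι).choose (Fintype.card ι / 2)) ^ 2 := by
  simp_rw [sum_comp_signSum_of_eq, nsmul_eq_mul, Nat.cast_pow]
  have hzero : ∑ p ∈ range (Fintype.card ι + 1),
      ((Fintype.card ι).choose p : ℤ) ^ 2 * (Fintype.card ι - 2 * p) = 0 := by
    have h := mul_sum_range_choose_sq_mul_sub (Fintype.card ι) (Fintype.card ι)
    rcases (Fintype.card ι).eq_zero_or_pos with h0 | h0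
    · simp [h0]
    · simpa [h0.ne'] using h
  rw [sum_range_mul_abs_of_sum_eq_zero hzero, mul_left_comm, mul_sum_range_choose_sq_mul_sub]

end AbsSum

section SqDiff

/-- The sum of `|X² - Y²|` over all pairs of sign vectors of length `n` with entry sums `X`
and `Y`. -/
def sumAbsSqDiff (n : ℕ) : ℤ :=
  ∑ ε : Fin n → ℤˣ, ∑ δ : Fin n → ℤˣ, |signSum ε ^ 2 - signSum δ ^ 2|

lemma abs_add_two_add_abs_sub_two_of_even {p : ℤ} (hp : Even p) :
    |p + 2| + |p - 2| = 2 * |p| + if p = 0 then 4 else 0 := by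
  obtain ⟨k, rfl⟩ := hp
  split_ifs <;> grind

lemma ite_add_eq_zero_mul_abs_sub (x y : ℤ) :
    (if x + y = 0 then 4 else 0) * |x - y| = 8 * if x = -y then |x| else 0 := by
  simp only [add_eq_zero_iff_eq_neg]
  split_ifs with h
  · rw [h, ← neg_add', abs_neg, abs_neg, ← two_mul, abs_mul, abs_two]
    ring
  · simp

lemma sum_neighbors_abs_sq_sub_sq {x y : ℤ} (h : Even (x + y)) :
    |(x + 1) ^ 2 - (y + 1) ^ 2| + |(x + 1) ^ 2 - (y - 1) ^ 2| +
        (|(x - 1) ^ 2 - (y + 1) ^ 2| + |(x - 1) ^ 2 - (y - 1) ^ 2|) =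
      4 * |x ^ 2 - y ^ 2| + 8 * ((if x = y then |x| else 0) + if x = -y then |x| else 0) := by
  -- With `p = x + y` and `q = x - y` the four terms are `|p ± 2| |q|` and `|p| |q ± 2|`.
  have h' : Even (x - y) := by simpa [parity_simps] using h
  have hp := abs_add_two_add_abs_sub_two_of_even h
  have hq := abs_add_two_add_abs_sub_two_of_even h'
  have hp0 := ite_add_eq_zero_mul_abs_sub x y
  have hq0 := ite_add_eq_zero_mul_abs_sub x (-y)
  rw [← sub_eq_add_neg, sub_neg_eq_add, neg_neg] at hq0
  rw [show (x + 1) ^ 2 - (y + 1) ^ 2 = (x + y + 2) * (x - y) by ring,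
    show (x + 1) ^ 2 - (y - 1) ^ 2 = (x + y) * (x - y + 2) by ring,
    show (x - 1) ^ 2 - (y + 1) ^ 2 = (x + y) * (x - y - 2) by ring,
    show (x - 1) ^ 2 - (y - 1) ^ 2 = (x + y - 2) * (x - y) by ring,
    sq_sub_sq]
  simp only [abs_mul]
  linear_combination |x - y| * hp + |x + y| * hq + hp0 + hq0

lemma sumAbsSqDiff_succ (n : ℕ) :
    sumAbsSqDiff (n + 1) = 4 * sumAbsSqDiff n + 16 *
      ∑ ε : Fin n → ℤˣ, ∑ δ : Fin n → ℤˣ,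
        (if signSum ε = signSum δ then |signSum ε| else 0) := by
  have hneg (ε : Fin n → ℤˣ) :
      ∑ δ : Fin n → ℤˣ, (if signSum ε = -signSum δ then |signSum ε| else 0) =
        ∑ δ : Fin n → ℤˣ, (if signSum ε = signSum δ then |signSum ε| else 0) := by
    simp_rw [← signSum_neg]
    exact Equiv.sum_comp (Equiv.neg (Fin n → ℤˣ)) fun δ =>
      if signSum ε = signSum δ then |signSum ε| else 0
  have hinner (x : ℤ) := sum_comp_signSum_succ (n := n) fun y => |x ^ 2 - y ^ 2|
  simp_rw [sumAbsSqDiff, hinner]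
  rw [sum_comp_signSum_succ fun x => ∑ δ : Fin n → ℤˣ,
    (|x ^ 2 - (signSum δ + 1) ^ 2| + |x ^ 2 - (signSum δ - 1) ^ 2|)]
  simp_rw [← sum_add_distrib, sum_neighbors_abs_sq_sub_sq (even_signSum_add_signSum _ _),
    sum_add_distrib, ← mul_sum, sum_add_distrib, hneg]
  ring

lemma sum_abs_signSum_of_eq_two_mul (m : ℕ) :
    ∑ ε : Fin (2 * m) → ℤˣ, ∑ δ : Fin (2 * m) → ℤˣ,
        (if signSum ε = signSum δ then |signSum ε| else 0) = m * (m.centralBinom : ℤ) ^ 2 := by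
  rcases m.eq_zero_or_pos with rfl | hm
  · simp [signSum]
  have h := card_mul_sum_abs_signSum_of_eq (ι := Fin (2 * m))
  rw [Fintype.card_fin, Nat.mul_div_cancel_left m two_pos, ← Nat.centralBinom] at h
  refine mul_left_cancel₀ (a := ((2 * m : ℕ) : ℤ)) (by positivity) (h.trans ?_)
  push_cast
  ring

lemma sum_abs_signSum_of_eq_two_mul_add_one (m : ℕ) :
    ∑ ε : Fin (2 * m + 1) → ℤˣ, ∑ δ : Fin (2 * m + 1) → ℤˣ,
        (if signSum ε = signSum δ then |signSum ε| else 0) =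
      2 * (2 * m + 1) * (m.centralBinom : ℤ) ^ 2 := by
  have h := card_mul_sum_abs_signSum_of_eq (ι := Fin (2 * m + 1))
  have hchoose : ((m : ℤ) + 1) * (2 * m + 1).choose m = (2 * m + 1) * m.centralBinom := by
    have := Nat.choose_mul_succ_eq (2 * m) m
    rw [← Nat.centralBinom, show 2 * m + 1 - m = m + 1 by lia] at this
    zify at this
    linarith
  rw [Fintype.card_fin, show (2 * m + 1) / 2 = m by lia] at h
  refine mul_left_cancel₀ (a := ((2 * m + 1 : ℕ) : ℤ)) (by positivity) (h.trans ?_)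
  push_cast
  rw [show (2 * m + 1 - m : ℤ) = m + 1 by ring, hchoose]
  ring

lemma sumAbsSqDiff_two_mul (m : ℕ) :
    sumAbsSqDiff (2 * m) = 8 * (m * m.centralBinom) ^ 2 := by
  induction m with
  | zero => simp [sumAbsSqDiff, signSum]
  | succ m ih =>
    have hcentral := Nat.succ_mul_centralBinom_succ m
    zify at hcentral
    rw [mul_add_one, sumAbsSqDiff_succ, sumAbsSqDiff_succ, ih, sum_abs_signSum_of_eq_two_mul,
      sum_abs_signSum_of_eq_two_mul_add_one]
    push_cast
    rw [hcentral]
    ring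

end SqDiff

section Orthogonal

variable {ι : Type*} [Fintype ι]

lemma signSum_eq_signSum_add_signSum_not (p : ι → Prop) [DecidablePred p] (ε : ι → ℤˣ) :
    signSum ε = signSum (fun i : {i // p i} => ε i) + signSum (fun i : {i // ¬p i} => ε i) :=
  (Fintype.sum_subtype_add_sum_subtype p fun i => (ε i : ℤ)).symm

lemma signSum_mul_eq_signSum_sub_signSum (γ ε : ι → ℤˣ) :
    signSum (γ * ε) =
      signSum (fun i : {i // γ i = 1} => ε i) - signSum (fun i : {i // ¬γ i = 1} => ε i) := by
  have hpos : (fun i : {i // γ i = 1} => (γ * ε) i) = fun i : {i // γ i = 1} => ε i := by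
    ext i
    simp [i.2]
  have hneg : (fun i : {i // ¬γ i = 1} => (γ * ε) i) = -fun i : {i // ¬γ i = 1} => ε i := by
    ext i
    simp [(Int.units_eq_one_or (γ i)).resolve_left i.2]
  rw [signSum_eq_signSum_add_signSum_not (γ · = 1), hpos, hneg, signSum_neg, sub_eq_add_neg]

lemma sum_abs_signSum_mul_signSum_mul [DecidableEq ι] {n : ℕ} (hn : Fintype.card ι = 2 * n)
    {γ : ι → ℤˣ} (hγ : signSum γ = 0) :
    ∑ ε : ι → ℤˣ, |signSum ε * signSum (γ * ε)| = sumAbsSqDiff n := by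
  have hpos : Fintype.card {i // γ i = 1} = n := by
    rw [signSum_eq_two_mul_card_sub] at hγ
    rw [Fintype.card_subtype]
    lia
  have hneg : Fintype.card {i // ¬γ i = 1} = n := by
    rw [Fintype.card_subtype_compl, hpos]
    lia
  have hsplit (ε : ι → ℤˣ) : |signSum ε * signSum (γ * ε)| =
      |signSum (fun i : {i // γ i = 1} => ε i) ^ 2 -
        signSum (fun i : {i // ¬γ i = 1} => ε i) ^ 2| := by
    rw [signSum_mul_eq_signSum_sub_signSum, signSum_eq_signSum_add_signSum_not (γ · = 1),
      sq_sub_sq]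
  calc ∑ ε : ι → ℤˣ, |signSum ε * signSum (γ * ε)|
    _ = ∑ x : ({i // γ i = 1} → ℤˣ) × ({i // ¬γ i = 1} → ℤˣ),
        |signSum x.1 ^ 2 - signSum x.2 ^ 2| := by
      simp_rw [hsplit]
      exact Equiv.sum_comp (Equiv.piEquivPiSubtypeProd (γ · = 1) fun _ => ℤˣ)
        fun x => |signSum x.1 ^ 2 - signSum x.2 ^ 2|
    _ = ∑ ε : {i // γ i = 1} → ℤˣ, ∑ δ : Fin n → ℤˣ, |signSum ε ^ 2 - signSum δ ^ 2| := by
      rw [Fintype.sum_prod_type]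
      exact sum_congr rfl fun ε _ => sum_comp_signSum_eq_of_card_eq
        (hneg.trans (Fintype.card_fin n).symm) fun y => |signSum ε ^ 2 - y ^ 2|
    _ = sumAbsSqDiff n := sum_comp_signSum_eq_of_card_eq
        (hpos.trans (Fintype.card_fin n).symm) fun x => ∑ δ : Fin n → ℤˣ, |x ^ 2 - signSum δ ^ 2|

end Orthogonal

section Expect

lemma expect_add_const_sq_sub_sq {α : Type*} [Fintype α] [Nonempty α] (f : α → ℝ) (c : ℝ) :
    𝔼 x, (f x + c) ^ 2 - (𝔼 x, (f x + c)) ^ 2 = 𝔼 x, f x ^ 2 - (𝔼 x, f x) ^ 2 := by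
  simp_rw [add_sq, expect_add_distrib, ← expect_mul, ← mul_expect, expect_const univ_nonempty]
  ring

variable {ι V M : Type*} [Fintype ι] [DecidableEq ι] [Fintype V] [Nonempty V] [AddCommMonoid M]
  [Module ℚ≥0 M]

lemma expect_expect_update (i : ι) (ψ : (ι → V) → M) :
    𝔼 c : ι → V, 𝔼 v : V, ψ (Function.update c i v) = 𝔼 c : ι → V, ψ c := by
  let swap : (ι → V) × V → (ι → V) × V := fun x => (Function.update x.1 i x.2, x.1 i)
  have hswap : Function.Involutive swap := fun x => by simp [swap]
  calc 𝔼 c : ι → V, 𝔼 v : V, ψ (Function.update c i v)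
    _ = 𝔼 x : (ι → V) × V, ψ (swap x).1 :=
      (expect_product' univ univ fun c v => ψ (Function.update c i v)).symm
    _ = 𝔼 x : (ι → V) × V, ψ x.1 :=
      Fintype.expect_equiv hswap.toPerm _ _ fun _ => rfl
    _ = 𝔼 c : ι → V, ψ c := by
      simp [← univ_product_univ, expect_product]

lemma expect_comp_apply (i : ι) (g : V → M) : 𝔼 c : ι → V, g (c i) = 𝔼 v : V, g v := by
  rw [← expect_expect_update i]
  simp

lemma expect_comp_apply₂ {i j : ι} (hij : i ≠ j) (g : V → V → M) :
    𝔼 c : ι → V, g (c i) (c j) = 𝔼 u : V, 𝔼 v : V, g u v := by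
  rw [← expect_expect_update j]
  simp only [Function.update_self, Function.update_of_ne hij]
  exact expect_comp_apply i fun u => 𝔼 v : V, g u v

end Expect

section SignVec

variable {ι : Type*}

/-- A sign vector, viewed as a real vector. -/
def signVec (ε : ι → ℤˣ) : ι → ℝ := fun i => ((ε i : ℤ) : ℝ)

lemma expect_intUnits : 𝔼 u : ℤˣ, ((u : ℤ) : ℝ) = 0 := by
  rw [Fintype.expect_eq_sum_div_card, UnitsInt.univ, sum_pair (by decide)]
  simp

lemma exists_signVec_eq {a : ι → ℝ} (ha : ∀ i, a i = 1 ∨ a i = -1) :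
    ∃ α : ι → ℤˣ, signVec α = a := by
  have h (i : ι) : ∃ u : ℤˣ, ((u : ℤ) : ℝ) = a i := by
    rcases ha i with hi | hi
    · exact ⟨1, by simp [hi]⟩
    · exact ⟨-1, by simp [hi]⟩
  choose α hα using h
  exact ⟨α, funext hα⟩

variable [Fintype ι]

lemma signVec_dotProduct_signVec (α ε : ι → ℤˣ) :
    signVec ε ⬝ᵥ signVec α = signSum (α * ε) := by
  simp [dotProduct, signVec, signSum, mul_comm]

variable [DecidableEq ι]

lemma expect_signVec_apply (i : ι) : 𝔼 ε : ι → ℤˣ, signVec ε i = 0 :=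
  (expect_comp_apply i fun u : ℤˣ => ((u : ℤ) : ℝ)).trans expect_intUnits

lemma expect_signVec_apply_mul_apply (i j : ι) :
    𝔼 ε : ι → ℤˣ, signVec ε i * signVec ε j = if i = j then 1 else 0 := by
  split_ifs with hij
  · subst hij
    have hsq (ε : ι → ℤˣ) : signVec ε i * signVec ε i = 1 := by
      rw [signVec]
      exact_mod_cast Int.units_coe_mul_self (ε i)
    simp [hsq]
  · rw [show 𝔼 ε : ι → ℤˣ, signVec ε i * signVec ε j =
      𝔼 u : ℤˣ, 𝔼 v : ℤˣ, ((u : ℤ) : ℝ) * ((v : ℤ) : ℝ) from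
        expect_comp_apply₂ hij fun u v : ℤˣ => ((u : ℤ) : ℝ) * ((v : ℤ) : ℝ)]
    simp_rw [← mul_expect, expect_intUnits, mul_zero, expect_const_zero]

lemma expect_signVec_dotProduct (u : ι → ℝ) : 𝔼 ε : ι → ℤˣ, signVec ε ⬝ᵥ u = 0 := by
  simp_rw [dotProduct, expect_sum_comm, ← expect_mul, expect_signVec_apply, zero_mul,
    sum_const_zero]

lemma expect_signVec_dotProduct_mul_dotProduct (u v : ι → ℝ) :
    𝔼 ε : ι → ℤˣ, (signVec ε ⬝ᵥ u) * (signVec ε ⬝ᵥ v) = u ⬝ᵥ v := by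
  simp_rw [dotProduct, sum_mul_sum, mul_mul_mul_comm _ (u _), expect_sum_comm, ← expect_mul,
    expect_signVec_apply_mul_apply]
  simp

lemma expect_abs_signVec_dotProduct_signVec (h : Even (Fintype.card ι)) (α : ι → ℤˣ) :
    𝔼 ε : ι → ℤˣ, |signVec ε ⬝ᵥ signVec α| =
      Fintype.card ι * (Fintype.card ι).choose (Fintype.card ι / 2) / 2 ^ Fintype.card ι := by
  simp_rw [signVec_dotProduct_signVec]
  trans 𝔼 ε : ι → ℤˣ, |(signSum ε : ℝ)|
  · exact Fintype.expect_equiv (Equiv.mulLeft α) _ _ fun _ => rfl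
  rw [Fintype.expect_eq_sum_div_card]
  simp_rw [← Int.cast_abs, ← Int.cast_sum, sum_abs_signSum]
  obtain ⟨m, hm⟩ := h.two_dvd
  rw [Fintype.card_fun, Fintype.card_units_int, hm, Nat.mul_div_cancel_left m two_pos]
  push_cast
  ring

lemma expect_abs_dotProduct_mul_abs_dotProduct {n : ℕ} (hn : Fintype.card ι = 2 * n)
    {α β : ι → ℤˣ} (h : signVec α ⬝ᵥ signVec β = 0) :
    𝔼 ε : ι → ℤˣ, |signVec ε ⬝ᵥ signVec α| * |signVec ε ⬝ᵥ signVec β| =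
      sumAbsSqDiff n / 2 ^ Fintype.card ι := by
  have hβα : signSum (β * α) = 0 := by
    rw [signVec_dotProduct_signVec] at h
    exact_mod_cast h
  have hβ (ε : ι → ℤˣ) : β * ε = β * α * (α * ε) := by
    have hα : α * α = 1 := by
      ext i
      simp
    rw [← mul_assoc, mul_assoc β α α, hα, mul_one]
  simp_rw [signVec_dotProduct_signVec, ← abs_mul]
  trans 𝔼 ε : ι → ℤˣ, |(signSum ε : ℝ) * signSum (β * α * ε)|
  · exact Fintype.expect_equiv (Equiv.mulLeft α) _ _ fun ε => by rw [hβ]; rfl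
  · rw [Fintype.expect_eq_sum_div_card, ← sum_abs_signSum_mul_signSum_mul hn hβα]
    simp

end SignVec

section SignForm

lemma sgn_mul_self (x : ℝ) : sgn x * x = |x| := by
  rw [sgn]
  split_ifs with h
  · rw [one_mul, abs_of_nonneg h]
  · rw [neg_one_mul, abs_of_neg (not_le.mp h)]

lemma sgn_mul_sgn_self (x : ℝ) : sgn x * sgn x = 1 := by
  rw [sgn]
  split_ifs <;> norm_num

variable {ι : Type*} [Fintype ι] {A : Matrix ι ι ℝ}

/-- The entry of `F = sgn(AᵀB)ᵀ A⁻¹ B`, for a Hadamard matrix `A`, at two columns `x` and `y`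
of `B`. -/
noncomputable def signForm (A : Matrix ι ι ℝ) (x y : ι → ℝ) : ℝ :=
  (Fintype.card ι : ℝ)⁻¹ * ∑ k, sgn (x ⬝ᵥ A.col k) * (y ⬝ᵥ A.col k)

lemma signForm_self (A : Matrix ι ι ℝ) (x : ι → ℝ) :
    signForm A x x = (Fintype.card ι : ℝ)⁻¹ * ∑ k, |x ⬝ᵥ A.col k| := by
  simp_rw [signForm, sgn_mul_self]

variable [DecidableEq ι]

lemma col_dotProduct_col {c : ℝ} (hA : Aᵀ * A = c • 1) (k l : ι) :
    A.col k ⬝ᵥ A.col l = if k = l then c else 0 := by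
  have h := congr_fun₂ hA k l
  rwa [Matrix.smul_apply, one_apply, smul_eq_mul, mul_ite, mul_one, mul_zero] at h

lemma expect_signForm (A : Matrix ι ι ℝ) (x : ι → ℝ) :
    𝔼 δ : ι → ℤˣ, signForm A x (signVec δ) = 0 := by
  simp_rw [signForm, ← mul_expect, expect_sum_comm, ← mul_expect, expect_signVec_dotProduct,
    mul_zero, sum_const_zero, mul_zero]

lemma expect_signForm_sq [Nonempty ι] (hA : Aᵀ * A = (Fintype.card ι : ℝ) • 1) (x : ι → ℝ) :
    𝔼 δ : ι → ℤˣ, signForm A x (signVec δ) ^ 2 = 1 := by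
  have hsq (y : ι → ℝ) : signForm A x y ^ 2 = (Fintype.card ι : ℝ)⁻¹ ^ 2 *
      ∑ k, ∑ l, sgn (x ⬝ᵥ A.col k) * sgn (x ⬝ᵥ A.col l) * ((y ⬝ᵥ A.col k) * (y ⬝ᵥ A.col l)) := by
    simp_rw [signForm, mul_pow, sq (∑ _, _), sum_mul_sum,
      mul_mul_mul_comm (sgn _) (y ⬝ᵥ A.col _)]
  simp_rw [hsq, ← mul_expect, expect_sum_comm, ← mul_expect,
    expect_signVec_dotProduct_mul_dotProduct, col_dotProduct_col hA]
  simp only [mul_ite, mul_zero, sum_ite_eq, mem_univ, if_true, sgn_mul_sgn_self, one_mul,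
    sum_const, card_univ, nsmul_eq_mul]
  field_simp

lemma expect_signForm_self [Nonempty ι] (hcard : Even (Fintype.card ι))
    (hA : ∀ i j, A i j = 1 ∨ A i j = -1) :
    𝔼 ε : ι → ℤˣ, signForm A (signVec ε) (signVec ε) =
      Fintype.card ι * (Fintype.card ι).choose (Fintype.card ι / 2) / 2 ^ Fintype.card ι := by
  have habs (k : ι) : 𝔼 ε : ι → ℤˣ, |signVec ε ⬝ᵥ A.col k| =
      Fintype.card ι * (Fintype.card ι).choose (Fintype.card ι / 2) / 2 ^ Fintype.card ι := by
    obtain ⟨α, hα⟩ := exists_signVec_eq fun i => hA i k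
    rw [← expect_abs_signVec_dotProduct_signVec hcard α, hα]
    rfl
  simp_rw [signForm_self, ← mul_expect, expect_sum_comm, habs]
  simp

lemma expect_abs_dotProduct_col_mul_abs_dotProduct_col {n : ℕ} (hcard : Fintype.card ι = 2 * n)
    (hA₁ : ∀ i j, A i j = 1 ∨ A i j = -1) (hA₂ : Aᵀ * A = (Fintype.card ι : ℝ) • 1) (k l : ι) :
    𝔼 ε : ι → ℤˣ, |signVec ε ⬝ᵥ A.col k| * |signVec ε ⬝ᵥ A.col l| =
      if k = l then (Fintype.card ι : ℝ) else sumAbsSqDiff n / 2 ^ Fintype.card ι := by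
  split_ifs with hkl
  · subst hkl
    simp_rw [abs_mul_abs_self, expect_signVec_dotProduct_mul_dotProduct, col_dotProduct_col hA₂,
      if_true]
  · obtain ⟨α, hα⟩ := exists_signVec_eq fun i => hA₁ i k
    obtain ⟨β, hβ⟩ := exists_signVec_eq fun i => hA₁ i l
    have hαβ : signVec α ⬝ᵥ signVec β = 0 := by
      rw [hα, hβ]
      exact (col_dotProduct_col hA₂ k l).trans (if_neg hkl)
    have h := expect_abs_dotProduct_mul_abs_dotProduct hcard hαβ
    rwa [hα, hβ] at h

lemma expect_signForm_self_sq [Nonempty ι] (hcard : 4 ∣ Fintype.card ι)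
    (hA₁ : ∀ i j, A i j = 1 ∨ A i j = -1) (hA₂ : Aᵀ * A = (Fintype.card ι : ℝ) • 1) :
    𝔼 ε : ι → ℤˣ, signForm A (signVec ε) (signVec ε) ^ 2 =
      1 + Fintype.card ι * (Fintype.card ι - 1) / 2 *
        (Fintype.card ι / 2).choose (Fintype.card ι / 4) ^ 2 / 2 ^ Fintype.card ι := by
  obtain ⟨m, hm⟩ := hcard
  have hm₂ : Fintype.card ι = 2 * (2 * m) := by lia
  have hchoose : (Fintype.card ι / 2).choose (Fintype.card ι / 4) = m.centralBinom := by
    rw [show Fintype.card ι / 2 = 2 * m by lia, show Fintype.card ι / 4 = m by lia,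
      Nat.centralBinom]
  have hrow (k : ι) (a b : ℝ) :
      ∑ l, (if k = l then a else b) = a + (Fintype.card ι - 1) * b := by
    simp [sum_ite, filter_eq, filter_ne, card_erase_of_mem, Fintype.card_pos]
  have hmℝ : (Fintype.card ι : ℝ) = 4 * m := by exact_mod_cast hm
  simp_rw [signForm_self, mul_pow, sq (∑ _, _), sum_mul_sum, ← mul_expect, expect_sum_comm,
    expect_abs_dotProduct_col_mul_abs_dotProduct_col hm₂ hA₁ hA₂, hrow, sumAbsSqDiff_two_mul,
    sum_const, card_univ, nsmul_eq_mul, hchoose]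
  push_cast
  field_simp
  rw [hmℝ]
  ring

end SignForm

section SignMatrix

variable {h d : ℕ}

/-- The encoding of signs by Booleans used by `signMat`. -/
def boolEquivSign : Bool ≃ ℤˣ where
  toFun b := if b then 1 else -1
  invFun u := u = 1
  left_inv b := by cases b <;> simp
  right_inv u := by rcases Int.units_eq_one_or u with rfl | rfl <;> simp

/-- The sign matrix with columns `c`. Indexing by columns exhibits the columns of a uniformly random
sign matrix as independent uniform sign vectors. -/
def signCols (c : Fin d → Fin h → ℤˣ) : Matrix (Fin h) (Fin d) ℝ :=
  of fun m j => signVec (c j) m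

lemma expec_eq_expect (f : Matrix (Fin h) (Fin d) ℝ → ℝ) :
    expec h d f = 𝔼 c : Fin d → Fin h → ℤˣ, f (signCols c) := by
  let e : (Fin h → Fin d → Bool) ≃ (Fin d → Fin h → ℤˣ) :=
    (Equiv.piComm fun _ _ => Bool).trans
      (Equiv.piCongrRight fun _ => Equiv.piCongrRight fun _ => boolEquivSign)
  have he (b : Fin h → Fin d → Bool) : signCols (e b) = signMat b := by
    ext i j
    cases hb : b i j <;> simp [signCols, signVec, signMat, e, boolEquivSign, hb]
  rw [expec, Fintype.expect_eq_sum_div_card, ← Equiv.sum_comp e]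
  simp [he, pow_mul]

variable {A : Matrix (Fin h) (Fin h) ℝ}

lemma Fmat_apply (hh : h ≠ 0) (hA : Aᵀ * A = (h : ℝ) • 1) (B : Matrix (Fin h) (Fin d) ℝ)
    (i j : Fin d) : Fmat A B i j = signForm A (B.col i) (B.col j) := by
  have hinv : A⁻¹ = (h : ℝ)⁻¹ • Aᵀ := by
    refine inv_eq_left_inv ?_
    rw [smul_mul, hA, smul_smul, inv_mul_cancel₀ (by exact_mod_cast hh), one_smul]
  have hC (k : Fin h) : Cmat A B i k = sgn (B.col i ⬝ᵥ A.col k) :=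
    congrArg sgn (dotProduct_comm _ _)
  have hy (k : Fin h) : (Aᵀ * B) k j = B.col j ⬝ᵥ A.col k := dotProduct_comm _ _
  rw [Fmat, hinv, Matrix.mul_smul, smul_mul, Matrix.smul_apply, Matrix.mul_assoc, mul_apply,
    signForm, Fintype.card_fin, smul_eq_mul]
  simp_rw [hC, hy]

lemma expec_comp_Fmat_add_one_diag (hh : h ≠ 0) (hA : Aᵀ * A = (h : ℝ) • 1) (φ : ℝ → ℝ)
    (i : Fin d) :
    expec h d (fun B => φ ((Fmat A B + 1) i i)) =
      𝔼 ε : Fin h → ℤˣ, φ (signForm A (signVec ε) (signVec ε) + 1) := by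
  simp_rw [expec_eq_expect, Matrix.add_apply, one_apply_eq, Fmat_apply hh hA]
  exact expect_comp_apply i fun ε => φ (signForm A (signVec ε) (signVec ε) + 1)

lemma expec_comp_Fmat_add_one_of_ne (hh : h ≠ 0) (hA : Aᵀ * A = (h : ℝ) • 1) (φ : ℝ → ℝ)
    {i j : Fin d} (hij : i ≠ j) :
    expec h d (fun B => φ ((Fmat A B + 1) i j)) =
      𝔼 ε : Fin h → ℤˣ, 𝔼 δ : Fin h → ℤˣ, φ (signForm A (signVec ε) (signVec δ)) := by
  simp_rw [expec_eq_expect, Matrix.add_apply, one_apply_ne hij, add_zero, Fmat_apply hh hA]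
  exact expect_comp_apply₂ hij fun ε δ => φ (signForm A (signVec ε) (signVec δ))

end SignMatrix

/-- Let `A` be a Hadamard matrix of order `h ≥ 4` (so `4 ∣ h`), `d ≥ 1`, and
for each `B ∈ {−1,1}^{h×d}` set `C = sgn(AᵀB)ᵀ`, `F = C A⁻¹ B`, `G = F + I`.
Then, averaging over all `2^{hd}` equally likely choices of `B`:
`E[g_{ii}] = 1 + 2^{−h} h binom(h, h/2)`; `E[g_{ij}] = 0` for `i ≠ j`;
`Var[g_{ii}] = 1 + h(h−1) 2^{−(h+1)} binom(h/2, h/4)² − h² 2^{−2h} binom(h, h/2)²`;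
and `Var[g_{ij}] = 1` for `i ≠ j`.  (Here `Var[X] = E[X²] − E[X]²`.) -/
theorem mean_var_G_entries (h d : ℕ) (h4 : 4 ∣ h) (hh : 4 ≤ h) (hd : 1 ≤ d)
    (A : Matrix (Fin h) (Fin h) ℝ)
    (hA1 : ∀ i j, A i j = 1 ∨ A i j = -1)
    (hA2 : Aᵀ * A = (h : ℝ) • 1) :
    (∀ i : Fin d,
      expec h d (fun B => (Fmat A B + 1) i i) =
        1 + (2 : ℝ) ^ (-(h : ℤ)) * h * (h.choose (h / 2) : ℝ)) ∧
    (∀ i j : Fin d, i ≠ j →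
      expec h d (fun B => (Fmat A B + 1) i j) = 0) ∧
    (∀ i : Fin d,
      expec h d (fun B => ((Fmat A B + 1) i i) ^ 2) -
        (expec h d (fun B => (Fmat A B + 1) i i)) ^ 2 =
      1 + (h : ℝ) * ((h : ℝ) - 1) * (2 : ℝ) ^ (-((h : ℤ) + 1)) *
            ((h / 2).choose (h / 4) : ℝ) ^ 2 -
        (h : ℝ) ^ 2 * (2 : ℝ) ^ (-(2 * (h : ℤ))) * (h.choose (h / 2) : ℝ) ^ 2) ∧
    (∀ i j : Fin d, i ≠ j →
      expec h d (fun B => ((Fmat A B + 1) i j) ^ 2) -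
        (expec h d (fun B => (Fmat A B + 1) i j)) ^ 2 = 1) := by
  have hh₀ : h ≠ 0 := by lia
  have : NeZero h := ⟨hh₀⟩
  have hcard : Fintype.card (Fin h) = h := Fintype.card_fin h
  have hmean := expect_signForm_self (A := A) (by rw [hcard, even_iff_two_dvd]; lia) hA1
  have hsq := expect_signForm_self_sq (A := A) (by rwa [hcard]) hA1 (by rwa [hcard])
  have hoff := expect_signForm_sq (A := A) (by rwa [hcard])
  rw [hcard] at hmean hsq
  refine ⟨fun i => ?_, fun i j hij => ?_, fun i => ?_, fun i j hij => ?_⟩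
  · rw [expec_comp_Fmat_add_one_diag hh₀ hA2 (fun x => x), expect_add_distrib, hmean,
      expect_const univ_nonempty, _root_.zpow_neg, zpow_natCast]
    ring
  · rw [expec_comp_Fmat_add_one_of_ne hh₀ hA2 (fun x => x) hij]
    simp_rw [expect_signForm, expect_const_zero]
  · rw [expec_comp_Fmat_add_one_diag hh₀ hA2 (· ^ 2),
      expec_comp_Fmat_add_one_diag hh₀ hA2 (fun x => x), expect_add_const_sq_sub_sq, hmean, hsq,
      _root_.zpow_neg, _root_.zpow_neg, zpow_add_one₀ two_ne_zero, two_mul,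
      zpow_add₀ two_ne_zero, zpow_natCast]
    field_simp
  · rw [expec_comp_Fmat_add_one_of_ne hh₀ hA2 (· ^ 2) hij,
      expec_comp_Fmat_add_one_of_ne hh₀ hA2 (fun x => x) hij]
    simp_rw [expect_signForm, hoff, expect_const_zero]
    simp
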